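/- Let Γ be a row-finite countable directed graph, F a potential and β ∈ ℝ, and assume there is a vertex v₀ with 0 < Σ_{n=0}^∞ A(β)^n_{v₀,v} < ∞ for all v ∈ Γ_V. Let E be a minimal end of Γ, i.e. an end such that whenever p ∈ Wan(Γ), q ∈ E and p → q, then p ∈ E. Then there exists an extremal e^{βF}-conformal measure m on P(Γ) with m(Z(v₀)) = 1 which is concentrated on E, i.e. m(P(Γ) \ E) = 0. -/

import Mathlib

/-!
A conformal measure `m` is determined by its vertex masses `ψ v = m (Z v)`, and the vectors which
occur are exactly the finite nonnegative `ψ` with `A(β) ψ = ψ` (`PreConf.harmonic`,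
`PreConf.ext`, `exists_preConf`; existence is Ionescu-Tulcea applied to the Doob transform).
The problem is thus one about harmonic vectors.

Fix a path `e` in the given end and write `G` for the Green function `∑ₙ A(β)ⁿ`. Since `G` is
finite, Borel–Cantelli shows that `m`-almost every path is wandering (`ae_wandering`). The point
of the argument is that `m`-almost every path leads to `e` if and only if
`ψ w ≤ ∑ u ∈ F₀, G w u * ψ u` for all finite `F₀`, all `N` and all vertices `w` from which no
`s (e n)` with `n ≥ N` can be reached outside `F₀` (`Dom`, `dom_of_ae_leads`,
`ae_leads_of_dom`). Indeed, a path from such a `w` which leads to `e` must visit `F₀`, and the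
right side bounds the mass of the paths visiting `F₀`; conversely, if the inequality holds, the
mass of the paths which sit at such vertices at time `n` is at most
`∑ u ∈ F₀, (∑ k ≥ n, A(β)ᵏ v u) * ψ u`, which tends to `0`.

For each `F₀`, `N` and `w` the condition is a linear inequality in finitely many coordinates, so
the harmonic vectors satisfying it and normalized by `ψ v₀ = 1` form a set `HBase` which is closed,
hence compact in the product topology because `G v₀ v > 0` bounds each coordinate. It is nonempty:
the Martin kernels `G · (s (e k)) / G v₀ (s (e k))` satisfy the domination inequality for `k ≥ N`
by splitting paths at a visit to `F₀` (`green_le_of_not_reach`), and they are harmonic at each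
given vertex for large `k`; so any limit point belongs to `HBase`.

By Krein–Milman `HBase` has an extreme point `f`. If `m'` is conformal and `m' ≤ m` for the measure
`m` of `f`, then `m - m'` is conformal as well, and both are concentrated on paths leading to `e`;
their vertex masses therefore lie in the cone over `HBase`, and extremality of `f` makes `m'` a
multiple of `m`. Finally `m`-almost every path is wandering and leads to `e`, hence belongs to the
end of `e` by minimality.
-/

open MeasureTheory Filter Topology
open scoped ENNReal NNReal

namespace GraphKMS

variable {V A : Type}

/-- The space `P(Γ)` of infinite paths of a directed graph with vertex set `V`,
arrow set `A`, source map `s` and range map `r`. -/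
structure PathSpace (s r : A → V) : Type where
  seq : ℕ → A
  compat : ∀ i, r (seq i) = s (seq (i + 1))

/-- The Borel σ-algebra of `P(Γ)`, i.e. the trace on `P(Γ)` of the Borel σ-algebra of the
product `A^ℕ` with `A` discrete. -/
instance (s r : A → V) : MeasurableSpace (PathSpace s r) :=
  MeasurableSpace.comap (fun p => p.seq) (@MeasurableSpace.pi ℕ (fun _ => A) (fun _ => ⊤))

/-- The shift map `σ`. -/
def shift (s r : A → V) (p : PathSpace s r) : PathSpace s r :=
  ⟨fun i => p.seq (i + 1), fun i => p.compat (i + 1)⟩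

/-- The cylinder set `Z(v)` of a vertex. -/
def cylV (s r : A → V) (v : V) : Set (PathSpace s r) := {p | s (p.seq 0) = v}

/-- The cylinder set `Z(a)` of an arrow. -/
def cylA (s r : A → V) (a : A) : Set (PathSpace s r) := {p | p.seq 0 = a}

/-- A finite path: a source vertex together with a compatible list of arrows.
The empty list corresponds to the path of length `0` given by the vertex `src`. -/
structure FinPath (s r : A → V) : Type where
  src : V
  arrows : List A
  head_src : ∀ h : arrows ≠ [], s (arrows.head h) = src
  chain : arrows.Chain' (fun a b => r a = s b)

/-- The range `r(μ)` of a finite path. -/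
def finRng (s r : A → V) (μ : FinPath s r) : V :=
  match μ.arrows.getLast? with
  | none => μ.src
  | some a => r a

/-- The additive extension `F(μ)` of a potential to finite paths. -/
def finWt (s r : A → V) (F : A → ℝ) (μ : FinPath s r) : ℝ := (μ.arrows.map F).sum

/-- The cylinder set `Z(μ)` of a finite path. -/
def finCyl (s r : A → V) (μ : FinPath s r) : Set (PathSpace s r) :=
  {p | s (p.seq 0) = μ.src ∧ ∀ i : Fin μ.arrows.length, p.seq i.1 = μ.arrows.get i}

/-- The set of vertices occurring in a finite path. -/
def finVerts (s r : A → V) (μ : FinPath s r) : Set V :=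
  {μ.src} ∪ {v | ∃ a ∈ μ.arrows, s a = v ∨ r a = v}

/-- The entries of the matrix `A(β)`. -/
noncomputable def Amat (s r : A → V) (F : A → ℝ) (β : ℝ) (v w : V) : ℝ≥0∞ :=
  ∑' a : {a : A // s a = v ∧ r a = w}, ENNReal.ofReal (Real.exp (-(β * F a.1)))

/-- Powers of a `[0,∞]`-valued matrix. -/
noncomputable def matPow (M : V → V → ℝ≥0∞) : ℕ → V → V → ℝ≥0∞
  | 0 => fun v w => ({v} : Set V).indicator (fun _ => (1 : ℝ≥0∞)) w
  | n + 1 => fun v w => ∑' u : V, M v u * matPow M n u w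

/-- The entries of `A(β)ⁿ`. -/
noncomputable def Apow (s r : A → V) (F : A → ℝ) (β : ℝ) (n : ℕ) (v w : V) : ℝ≥0∞ :=
  matPow (Amat s r F β) n v w

/-- The Green function `Σₙ A(β)ⁿ_{v,w}`. -/
noncomputable def Green (s r : A → V) (F : A → ℝ) (β : ℝ) (v w : V) : ℝ≥0∞ :=
  ∑' n : ℕ, Apow s r F β n v w

/-- The Martin kernel `K_β(v,w)` with base point `v₀`. -/
noncomputable def MartinK (s r : A → V) (F : A → ℝ) (β : ℝ) (v₀ v w : V) : ℝ≥0∞ :=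
  Green s r F β v w / Green s r F β v₀ w

/-- A harmonic vector for a `[0,∞]`-valued matrix: a nonzero, finite-valued,
nonnegative vector fixed by the matrix. -/
def IsHarmonic (M : V → V → ℝ≥0∞) (ψ : V → ℝ≥0∞) : Prop :=
  ψ ≠ 0 ∧ (∀ v, ψ v ≠ ∞) ∧ ∀ v, (∑' w : V, M v w * ψ w) = ψ v

/-- A minimal harmonic vector. -/
def IsMinimalHarmonic (M : V → V → ℝ≥0∞) (ψ : V → ℝ≥0∞) : Prop :=
  IsHarmonic M ψ ∧ ∀ φ : V → ℝ≥0∞, IsHarmonic M φ → (∀ v, φ v ≤ ψ v) →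
    ∃ c : ℝ≥0, 0 < c ∧ ∀ v, φ v = (c : ℝ≥0∞) * ψ v

/-- An `e^{βF}`-conformal measure: a nonzero Borel measure which is finite on the
cylinders of vertices and satisfies `m(σ(B ∩ Z(a))) = e^{βF(a)} m(B ∩ Z(a))`. -/
def Conformal (s r : A → V) (F : A → ℝ) (β : ℝ) (m : Measure (PathSpace s r)) : Prop :=
  m ≠ 0 ∧ (∀ v : V, m (cylV s r v) ≠ ∞) ∧
    ∀ (a : A) (B : Set (PathSpace s r)), MeasurableSet B →
      m (shift s r '' (B ∩ cylA s r a)) =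
        ENNReal.ofReal (Real.exp (β * F a)) * m (B ∩ cylA s r a)

/-- An extremal conformal measure: every conformal measure dominated by it is a
positive scalar multiple of it. -/
def ExtremalConformal (s r : A → V) (F : A → ℝ) (β : ℝ) (m : Measure (PathSpace s r)) : Prop :=
  Conformal s r F β m ∧ ∀ m' : Measure (PathSpace s r), Conformal s r F β m' →
    (∀ B : Set (PathSpace s r), MeasurableSet B → m' B ≤ m B) →
    ∃ c : ℝ≥0, 0 < c ∧ m' = (c : ℝ≥0∞) • m

/-- A wandering path: its vertices leave every finite set of vertices. -/
def Wandering (s r : A → V) (p : PathSpace s r) : Prop :=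
  ∀ F₀ : Finset V, ∃ N : ℕ, ∀ i, N ≤ i → s (p.seq i) ∉ F₀

/-- A ray: an infinite path with pairwise distinct vertices. -/
def IsRay (s r : A → V) (p : PathSpace s r) : Prop :=
  Function.Injective fun i => s (p.seq i)

/-- The relation `p → q` between (wandering) paths. -/
def Leads (s r : A → V) (p q : PathSpace s r) : Prop :=
  ∀ (F₀ : Finset V) (N : ℕ), ∃ n₁ n₂ : ℕ, N ≤ n₁ ∧ N ≤ n₂ ∧
    ∃ μ : FinPath s r, μ.src = s (p.seq n₁) ∧ finRng s r μ = s (q.seq n₂) ∧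
      ∀ v ∈ finVerts s r μ, v ∉ F₀

/-- Nonempty path lists from `v` to `w`. -/
def IsPathList (s r : A → V) (l : List A) (v w : V) : Prop :=
  l ≠ [] ∧ l.Chain' (fun a b => r a = s b) ∧
    (∀ h : l ≠ [], s (l.head h) = v) ∧ ∀ h : l ≠ [], r (l.getLast h) = w

/-- The set `L_j(y)` (zero-indexed in `j`). -/
def Lset (s r : A → V) (p : PathSpace s r) (j : ℕ) : Set (List A) :=
  {l | IsPathList s r l (s (p.seq j)) (s (p.seq (j + 1))) ∧
    ∀ a ∈ l, ∀ i ≤ j, r a ≠ s (p.seq i)}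

/-- The sum `Σ_{μ ∈ L_j(y)} e^{-βF(μ)}`. -/
noncomputable def LSum (s r : A → V) (F : A → ℝ) (β : ℝ) (p : PathSpace s r) (j : ℕ) : ℝ≥0∞ :=
  ∑' l : Lset s r p j, ENNReal.ofReal (Real.exp (-(β * (l.1.map F).sum)))

/-- The product `𝕎(y[1,k+1[)` (zero-indexed: the product of the first `k` level sums). -/
noncomputable def Wprod (s r : A → V) (F : A → ℝ) (β : ℝ) (p : PathSpace s r) (k : ℕ) : ℝ≥0∞ :=
  ∏ j ∈ Finset.range k, LSum s r F β p j

/-- `𝕍_β(v,y)`: the limit of the nondecreasing sequence of quotients. -/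
noncomputable def Vbeta (s r : A → V) (F : A → ℝ) (β : ℝ) (v : V) (p : PathSpace s r) : ℝ≥0∞ :=
  Filter.limsup (fun k => Green s r F β v (s (p.seq k)) / Wprod s r F β p k) Filter.atTop

/-- `B_k(y)` (zero-indexed in `k`). -/
def Bset (s r : A → V) (p : PathSpace s r) (k : ℕ) : Set (PathSpace s r) :=
  {x | s (x.seq 0) = s (p.seq k) ∧ ∀ i, 1 ≤ i → ∀ j ≤ k, s (x.seq i) ≠ s (p.seq j)}

/-- `𝔹_k(y)` (zero-indexed in `k`). -/
def BBset (s r : A → V) (p : PathSpace s r) (k : ℕ) : Set (PathSpace s r) :=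
  Bset s r p k ∩ ⋂ (j : ℕ) (_ : k + 1 ≤ j), ⋃ i : ℕ, (shift s r)^[i] ⁻¹' Bset s r p j

/-- `𝔹(y)`. -/
def BB (s r : A → V) (p : PathSpace s r) : Set (PathSpace s r) :=
  ⋃ (n : ℕ) (k : ℕ), (shift s r)^[n] ⁻¹' ((shift s r)^[k] '' BBset s r p 0)

/-- A simple path from `v` to `w`: no arrow except possibly the last one has range `w`. -/
def IsSimplePath (s r : A → V) (v w : V) (l : List A) : Prop :=
  IsPathList s r l v w ∧ ∀ a ∈ l.dropLast, r a ≠ w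

/-- `R_{βF}(v,w)`: the sum of `e^{-βF(ν)}` over all simple paths `ν` from `v` to `w`. -/
noncomputable def Rsum (s r : A → V) (F : A → ℝ) (β : ℝ) (v w : V) : ℝ≥0∞ :=
  ∑' l : {l : List A // IsSimplePath s r v w l},
    ENNReal.ofReal (Real.exp (-(β * (l.1.map F).sum)))

open Classical in
/-- The restriction of a matrix to a subset of the index set (extended by `0`). -/
noncomputable def restrMat (M : V → V → ℝ≥0∞) (S : Set V) (v w : V) : ℝ≥0∞ :=
  if v ∈ S ∧ w ∈ S then M v w else 0

/-- A loop: a nonempty path list whose range equals its source. -/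
def IsLoop (s r : A → V) (l : List A) : Prop :=
  l ≠ [] ∧ l.Chain' (fun a b => r a = s b) ∧
    ∀ h : l ≠ [], r (l.getLast h) = s (l.head h)

/-! ### Markov chains on a countable set -/

/-- The law of the Markov chain with transition probabilities `k` started at `a₀`, obtained from
the Ionescu-Tulcea theorem. The measurable structure on `A` is written out as `⊤`, to agree with
that of `PathSpace`. -/
lemma exists_markov_chain {A : Type} [Countable A] (k : A → PMF A) (a₀ : A) :
    ∃ μ : @Measure (ℕ → A) (@MeasurableSpace.pi ℕ (fun _ => A) (fun _ => ⊤)),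
      μ {y | y 0 ≠ a₀} = 0 ∧ ∀ (n : ℕ) (x : ℕ → A), x 0 = a₀ →
        μ {y | ∀ i ≤ n, y i = x i} = ∏ i ∈ Finset.range n, k (x i) (x (i + 1)) := by
  classical
  let : MeasurableSpace A := ⊤
  let κ (n : ℕ) : ProbabilityTheory.Kernel (Π _ : Finset.Iic n, A) A :=
    ProbabilityTheory.Kernel.ofFunOfCountable
      (fun h => (k (h ⟨n, Finset.mem_Iic.2 le_rfl⟩)).toMeasure)
  have : ∀ n, ProbabilityTheory.IsMarkovKernel (κ n) := fun n =>
    ⟨fun h => by dsimp [κ, ProbabilityTheory.Kernel.ofFunOfCountable]; infer_instance⟩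
  refine ⟨ProbabilityTheory.Kernel.traj (X := fun _ => A) κ 0 (fun _ => a₀), ?_⟩
  have key : ∀ (n : ℕ) (x : ℕ → A), x 0 = a₀ →
      ProbabilityTheory.Kernel.partialTraj (X := fun _ => A) κ 0 n (fun _ => a₀)
        {Preorder.frestrictLe (π := fun _ => A) n x} = ∏ i ∈ Finset.range n, k (x i) (x (i + 1)) := by
    intro n x hx
    induction n with
    | zero =>
      rw [ProbabilityTheory.Kernel.partialTraj_self, ProbabilityTheory.Kernel.id_apply,
        Measure.dirac_apply' _ (measurableSet_singleton _)]
      simp only [Finset.range_zero, Finset.prod_empty]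
      rw [Set.indicator_of_mem]
      · rfl
      · rw [Set.mem_singleton_iff]
        funext ⟨i, hi⟩
        have : i = 0 := by simpa using hi
        subst this
        exact hx.symm
    | succ n ih =>
      rw [ProbabilityTheory.Kernel.partialTraj_succ_eq_comp (Nat.zero_le n),
        ProbabilityTheory.Kernel.comp_apply' _ _ _ (measurableSet_singleton _)]
      have h1 : ∀ z : (Π _ : Finset.Iic n, A),
          ProbabilityTheory.Kernel.partialTraj (X := fun _ => A) κ n (n + 1) z
            {Preorder.frestrictLe (π := fun _ => A) (n + 1) x} =
          ({Preorder.frestrictLe (π := fun _ => A) n x} : Set _).indicator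
            (fun _ => k (x n) (x (n + 1))) z := by
        intro z
        rw [ProbabilityTheory.Kernel.partialTraj_succ_self,
          ProbabilityTheory.Kernel.map_apply' _ (by fun_prop) _ (measurableSet_singleton _)]
        have hpre : (IicProdIoc (X := fun _ => A) n (n + 1)) ⁻¹'
              {Preorder.frestrictLe (π := fun _ => A) (n + 1) x} =
            ({Preorder.frestrictLe (π := fun _ => A) n x} : Set _) ×ˢ
              {y | y ⟨n + 1, by simp⟩ = x (n + 1)} := by
          ext ⟨u, y⟩
          simp only [Set.mem_preimage, Set.mem_singleton_iff, Set.mem_prod, Set.mem_ofPred_eq]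
          constructor
          · intro h
            refine ⟨?_, ?_⟩
            · funext ⟨i, hi⟩
              have hi' : i ≤ n := by simpa using hi
              have := congrFun h ⟨i, by simp; omega⟩
              simpa [IicProdIoc, hi'] using this
            · have := congrFun h ⟨n + 1, by simp⟩
              simpa [IicProdIoc] using this
          · rintro ⟨h1, h2⟩
            funext ⟨i, hi⟩
            have hi' : i ≤ n + 1 := by simpa using hi
            rcases Nat.lt_or_ge n i with h | h
            · obtain rfl : i = n + 1 := by omega
              simpa [IicProdIoc] using h2
            · have := congrFun h1 ⟨i, by simpa using h⟩
              simpa [IicProdIoc, h] using this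
        have := ProbabilityTheory.Kernel.IsMarkovKernel.map (κ n)
          (MeasurableEquiv.piSingleton (X := fun _ => A) n).measurable
        rw [hpre, ProbabilityTheory.Kernel.prod_apply_prod, ProbabilityTheory.Kernel.id_apply,
          Measure.dirac_apply' _ (measurableSet_singleton _),
          ProbabilityTheory.Kernel.map_apply' _ (by fun_prop) _ (Set.to_countable _).measurableSet]
        by_cases hz : z = Preorder.frestrictLe (π := fun _ => A) n x
        · subst hz
          simp only [Set.mem_singleton_iff, Set.indicator_of_mem, Pi.one_apply, one_mul]
          have : (MeasurableEquiv.piSingleton (X := fun _ => A) n) ⁻¹'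
              {y | y ⟨n + 1, by simp⟩ = x (n + 1)} = {x (n + 1)} := by
            ext b
            simp [MeasurableEquiv.piSingleton]
          rw [this]
          exact (k (x n)).toMeasure_apply_singleton _ (measurableSet_singleton _)
        · simp [hz]
      simp_rw [h1]
      rw [lintegral_indicator (measurableSet_singleton _), lintegral_const,
        Measure.restrict_apply_univ, ih, Finset.prod_range_succ, mul_comm]
  have main : ∀ (n : ℕ) (x : ℕ → A), x 0 = a₀ →
      ProbabilityTheory.Kernel.traj (X := fun _ => A) κ 0 (fun _ => a₀)
        {y | ∀ i ≤ n, y i = x i} = ∏ i ∈ Finset.range n, k (x i) (x (i + 1)) := by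
    intro n x hx
    rw [← key n x hx, ← ProbabilityTheory.Kernel.traj_map_frestrictLe_apply,
      Measure.map_apply (by fun_prop) (measurableSet_singleton _)]
    congr 1
    ext y
    simp only [Set.mem_ofPred_eq, Set.mem_preimage, Set.mem_singleton_iff, funext_iff]
    constructor
    · rintro h ⟨i, hi⟩
      exact h i (by simpa using hi)
    · intro h i hi
      exact h ⟨i, by simpa using hi⟩
  refine ⟨?_, main⟩
  have h0 := main 0 (fun _ => a₀) rfl
  rw [Finset.range_zero, Finset.prod_empty] at h0
  have hm : MeasurableSet {y : ℕ → A | ∀ i ≤ 0, y i = a₀} := by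
    have : {y : ℕ → A | ∀ i ≤ 0, y i = a₀} = (fun y : ℕ → A => y 0) ⁻¹' {a₀} := by
      ext y; simp
    rw [this]
    exact measurable_pi_apply 0 (measurableSet_singleton _)
  have h1 := (prob_compl_eq_zero_iff hm).2 h0
  convert h1 using 2
  ext y; simp

/-! ### Cylinders -/

/-- The weight `e^{-βF(a)}` of an arrow. -/
noncomputable def wt (F : A → ℝ) (β : ℝ) (a : A) : ℝ≥0∞ :=
  ENNReal.ofReal (Real.exp (-(β * F a)))

lemma wt_ne_top (F : A → ℝ) (β : ℝ) (a : A) : wt F β a ≠ ∞ := ENNReal.ofReal_ne_top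

lemma wt_ne_zero (F : A → ℝ) (β : ℝ) (a : A) : wt F β a ≠ 0 := by
  simp [wt, Real.exp_pos]

lemma wt_mul_exp (F : A → ℝ) (β : ℝ) (a : A) :
    wt F β a * ENNReal.ofReal (Real.exp (β * F a)) = 1 := by
  rw [wt, ← ENNReal.ofReal_mul (Real.exp_pos _).le, ← Real.exp_add]
  simp

/-- The cylinder of all infinite paths whose first `n + 1` arrows are `x 0, …, x n`. -/
def cylN (s r : A → V) (n : ℕ) (x : ℕ → A) : Set (PathSpace s r) :=
  {p | ∀ i ≤ n, p.seq i = x i}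

open Classical in
/-- The operator `ψ ↦ A(β)ψ`, written as a sum over arrows. -/
noncomputable def opT (s r : A → V) (F : A → ℝ) (β : ℝ) (g : V → ℝ≥0∞) (v : V) : ℝ≥0∞ :=
  ∑' a : A, if s a = v then wt F β a * g (r a) else 0

open Classical in
/-- The mass which a conformal measure with vertex masses `ψ` gives to the cylinder
`cylN s r n x`; it vanishes when `x 0, …, x n` is not a path. -/
noncomputable def cylWt (s r : A → V) (F : A → ℝ) (β : ℝ) (ψ : V → ℝ≥0∞) (n : ℕ) (x : ℕ → A) :
    ℝ≥0∞ :=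
  if ∀ i < n, r (x i) = s (x (i + 1)) then
    (∏ i ∈ Finset.range (n + 1), wt F β (x i)) * ψ (r (x n)) else 0

/-- Conformality without the requirement that the measure be nonzero. -/
def PreConf (s r : A → V) (F : A → ℝ) (β : ℝ) (m : Measure (PathSpace s r)) : Prop :=
  (∀ v : V, m (cylV s r v) ≠ ∞) ∧
    ∀ (a : A) (B : Set (PathSpace s r)), MeasurableSet B →
      m (shift s r '' (B ∩ cylA s r a)) =
        ENNReal.ofReal (Real.exp (β * F a)) * m (B ∩ cylA s r a)

/-- Extension of a finite word to a sequence by repeating its last letter. -/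
def extWord {n : ℕ} (z : Fin (n + 1) → A) (j : ℕ) : A := z ⟨min j n, by omega⟩

lemma extWord_apply {n : ℕ} (y : ℕ → A) {j : ℕ} (hj : j ≤ n) :
    extWord (fun i : Fin (n + 1) => y i) j = y j := by
  simp [extWord, hj]

section Measurability

variable (s r : A → V)

lemma measurableSet_seq (i : ℕ) (S : Set A) :
    MeasurableSet {p : PathSpace s r | p.seq i ∈ S} := by
  let : MeasurableSpace A := ⊤
  exact ⟨{y | y i ∈ S}, measurable_pi_apply i (MeasurableSpace.measurableSet_top (s := S)), rfl⟩

lemma measurable_of_seq {X : Type*} [MeasurableSpace X] {f : X → PathSpace s r}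
    (hf : ∀ (i : ℕ) (S : Set A), MeasurableSet {x | (f x).seq i ∈ S}) : Measurable f := by
  let : MeasurableSpace A := ⊤
  rw [measurable_comap_iff]
  exact measurable_pi_iff.2 fun i S _ => hf i S

lemma measurable_shift : Measurable (shift s r) :=
  measurable_of_seq s r fun i S => measurableSet_seq s r (i + 1) S

lemma measurableSet_cylV (v : V) : MeasurableSet (cylV s r v) :=
  measurableSet_seq s r 0 {a | s a = v}

lemma measurableSet_vert (i : ℕ) (S : Set V) :
    MeasurableSet {p : PathSpace s r | s (p.seq i) ∈ S} :=
  measurableSet_seq s r i (s ⁻¹' S)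

lemma measurableSet_cylA (a : A) : MeasurableSet (cylA s r a) :=
  measurableSet_seq s r 0 {a}

lemma measurableSet_cylN (n : ℕ) (x : ℕ → A) : MeasurableSet (cylN s r n x) := by
  have : cylN s r n x = ⋂ (i : ℕ) (_ : i ≤ n), {p | p.seq i ∈ ({x i} : Set A)} := by
    ext p; simp [cylN]
  rw [this]
  exact MeasurableSet.iInter fun i => MeasurableSet.iInter fun _ => measurableSet_seq s r i _

lemma cylN_zero (x : ℕ → A) : cylN s r 0 x = cylA s r (x 0) := by
  ext p; simp [cylN, cylA]

lemma generateFrom_cylN [Countable A] :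
    (inferInstance : MeasurableSpace (PathSpace s r)) =
      MeasurableSpace.generateFrom {B | ∃ n x, B = cylN s r n x} := by
  apply le_antisymm
  · have key : ∀ (i : ℕ) (S : Set A),
        MeasurableSet[MeasurableSpace.generateFrom {B | ∃ n x, B = cylN s r n x}]
          {p : PathSpace s r | p.seq i ∈ S} := by
      intro i S
      have : {p : PathSpace s r | p.seq i ∈ S} =
          ⋃ (z : Fin (i + 1) → A) (_ : extWord z i ∈ S), cylN s r i (extWord z) := by
        ext p
        simp only [Set.mem_ofPred_eq, Set.mem_iUnion, exists_prop, cylN]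
        constructor
        · intro h
          refine ⟨fun j => p.seq j, ?_, fun j hj => (extWord_apply p.seq hj).symm⟩
          rwa [extWord_apply p.seq le_rfl]
        · rintro ⟨z, hz, h⟩
          rw [h i le_rfl]; exact hz
      rw [this]
      refine MeasurableSet.iUnion fun z => MeasurableSet.iUnion fun _ => ?_
      exact MeasurableSpace.measurableSet_generateFrom ⟨i, _, rfl⟩
    have h2 := @measurable_of_seq V A s r (PathSpace s r)
      (MeasurableSpace.generateFrom {B | ∃ n x, B = cylN s r n x}) id key
    intro B hB
    exact h2 hB
  · apply MeasurableSpace.generateFrom_le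
    rintro B ⟨n, x, rfl⟩
    exact measurableSet_cylN s r n x

lemma isPiSystem_cylN : IsPiSystem {B | ∃ n x, B = cylN s r n x} := by
  rintro _ ⟨n, x, rfl⟩ _ ⟨k, y, rfl⟩ ⟨p, hp1, hp2⟩
  refine ⟨max n k, p.seq, ?_⟩
  ext q
  simp only [cylN, Set.mem_inter_iff, Set.mem_ofPred_eq] at *
  constructor
  · rintro ⟨h1, h2⟩ i hi
    rcases le_max_iff.1 hi with h | h
    · rw [h1 i h, hp1 i h]
    · rw [h2 i h, hp2 i h]
  · intro h
    exact ⟨fun i hi => by rw [h i (le_max_of_le_left hi), hp1 i hi],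
      fun i hi => by rw [h i (le_max_of_le_right hi), hp2 i hi]⟩

/-- Measures agreeing on the π-system of cylinders are equal, provided the countable cover by the
`Z(a)` consists of sets of finite measure. -/
lemma ext_cylN [Countable A] {m m' : Measure (PathSpace s r)}
    (hfin : ∀ a, m (cylA s r a) ≠ ∞) (h : ∀ n x, m (cylN s r n x) = m' (cylN s r n x)) :
    m = m' := by
  refine Measure.ext_of_generateFrom_of_cover_subset (T := Set.range (cylA s r))
    (generateFrom_cylN s r) (isPiSystem_cylN s r) ?_ (Set.countable_range _) ?_ ?_ ?_
  · rintro _ ⟨a, rfl⟩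
    exact ⟨0, fun _ => a, (cylN_zero s r fun _ => a).symm⟩
  · ext p; simp [cylA]
  · rintro _ ⟨a, rfl⟩; exact hfin a
  · rintro _ ⟨n, x, rfl⟩; exact h n x

lemma cylA_subset_cylV (a : A) : cylA s r a ⊆ cylV s r (s a) := by
  intro p hp; simp only [cylA, cylV, Set.mem_ofPred_eq] at *; rw [hp]

open Classical in
lemma measure_cylV_inter [Countable A] (m : Measure (PathSpace s r)) (v : V)
    {B : Set (PathSpace s r)} (hB : MeasurableSet B) :
    m (cylV s r v ∩ B) = ∑' a : A, if s a = v then m (cylA s r a ∩ B) else 0 := by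
  have : cylV s r v ∩ B = ⋃ a : A, if s a = v then cylA s r a ∩ B else ∅ := by
    ext p
    simp only [Set.mem_inter_iff, Set.mem_iUnion]
    constructor
    · rintro ⟨h1, h2⟩
      refine ⟨p.seq 0, ?_⟩
      rw [if_pos (show s (p.seq 0) = v from h1)]; exact ⟨rfl, h2⟩
    · rintro ⟨a, ha⟩
      split_ifs at ha with h
      · refine ⟨?_, ha.2⟩
        rw [← h]; exact cylA_subset_cylV s r a ha.1
      · exact ha.elim
  rw [this, measure_iUnion]
  · refine tsum_congr fun a => ?_
    split_ifs <;> simp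
  · intro a b hab
    refine Set.disjoint_left.2 fun p hp hq => hab ?_
    dsimp only at hp hq
    split_ifs at hp hq
    · exact hp.1.symm.trans hq.1
    all_goals first | exact hp.elim | exact hq.elim
  · intro a
    split_ifs
    · exact (measurableSet_cylA s r a).inter hB
    · exact MeasurableSet.empty

end Measurability

/-! ### Conformality in terms of cylinders -/

section Conformality

variable {s r : A → V} {F : A → ℝ} {β : ℝ}

lemma shift_image (a : A) (B : Set (PathSpace s r)) :
    shift s r '' (shift s r ⁻¹' B ∩ cylA s r a) = cylV s r (r a) ∩ B := by
  ext p
  constructor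
  · rintro ⟨q, ⟨h1, h2⟩, rfl⟩
    refine ⟨?_, h1⟩
    simp only [cylA, cylV, Set.mem_ofPred_eq] at *
    rw [← h2]; exact (q.compat 0).symm
  · rintro ⟨h1, h2⟩
    refine ⟨⟨fun i => Nat.casesOn i a p.seq, ?_⟩, ⟨?_, ?_⟩, ?_⟩
    · intro i
      cases i with
      | zero => exact h1.symm
      | succ i => exact p.compat i
    · exact h2
    · rfl
    · rfl

/-- Conformality on sets of the form `aB`: the form in which it is used below. -/
lemma PreConf.measure_cylA_inter {m : Measure (PathSpace s r)} (hm : PreConf s r F β m) (a : A)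
    {B : Set (PathSpace s r)} (hB : MeasurableSet B) :
    m (cylA s r a ∩ shift s r ⁻¹' B) = wt F β a * m (cylV s r (r a) ∩ B) := by
  have := hm.2 a _ (measurable_shift s r hB)
  rw [shift_image] at this
  rw [this, ← mul_assoc, wt_mul_exp, one_mul, Set.inter_comm]

lemma PreConf.measure_cylA {m : Measure (PathSpace s r)} (hm : PreConf s r F β m) (a : A) :
    m (cylA s r a) = wt F β a * m (cylV s r (r a)) := by
  simpa using hm.measure_cylA_inter a MeasurableSet.univ

lemma PreConf.measure_cylN {m : Measure (PathSpace s r)} (hm : PreConf s r F β m) (n : ℕ)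
    (x : ℕ → A) : m (cylN s r n x) = cylWt s r F β (fun v => m (cylV s r v)) n x := by
  induction n generalizing x with
  | zero => rw [cylN_zero, hm.measure_cylA]; simp [cylWt]
  | succ n ih =>
    have h1 : cylN s r (n + 1) x =
        cylA s r (x 0) ∩ shift s r ⁻¹' (cylN s r n fun i => x (i + 1)) := by
      ext p
      simp only [cylN, cylA, shift, Set.mem_ofPred_eq, Set.mem_inter_iff, Set.mem_preimage]
      constructor
      · intro h
        exact ⟨h 0 (by omega), fun i hi => h (i + 1) (by omega)⟩
      · rintro ⟨h0, h⟩ i hi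
        cases i with
        | zero => exact h0
        | succ i => exact h i (by omega)
    rw [h1, hm.measure_cylA_inter _ (measurableSet_cylN s r _ _)]
    by_cases hc : r (x 0) = s (x 1)
    · have h2 : cylV s r (r (x 0)) ∩ cylN s r n (fun i => x (i + 1)) =
          cylN s r n (fun i => x (i + 1)) := by
        apply Set.inter_eq_right.2
        intro p hp
        change s (p.seq 0) = r (x 0)
        rw [hp 0 (by omega), hc]
      rw [h2, ih]
      simp only [cylWt]
      have h3 : (∀ i < n + 1, r (x i) = s (x (i + 1))) ↔
          ∀ i < n, r (x (i + 1)) = s (x (i + 1 + 1)) := by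
        constructor
        · intro h i hi
          exact h (i + 1) (by omega)
        · intro h i hi
          cases i with
          | zero => exact hc
          | succ i => exact h i (by omega)
      by_cases h4 : ∀ i < n, r (x (i + 1)) = s (x (i + 1 + 1))
      · rw [if_pos h4, if_pos (h3.2 h4), Finset.prod_range_succ' _ (n + 1)]
        ring
      · rw [if_neg h4, if_neg (fun h => h4 (h3.1 h)), mul_zero]
    · have h2 : cylV s r (r (x 0)) ∩ cylN s r n (fun i => x (i + 1)) = ∅ := by
        apply Set.eq_empty_of_forall_notMem
        rintro p ⟨h, hp⟩
        apply hc
        rw [← h, hp 0 (by omega)]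
      rw [h2, measure_empty, mul_zero, cylWt, if_neg]
      intro h
      exact hc (h 0 (by omega))

/-- The map `p ↦ ap` on paths starting at `r a`, extended by the identity. -/
noncomputable def consA (s r : A → V) (a : A) (p : PathSpace s r) : PathSpace s r :=
  open Classical in
  if h : r a = s (p.seq 0) then
    ⟨fun i => Nat.casesOn i a p.seq, fun i => by cases i with
      | zero => exact h
      | succ i => exact p.compat i⟩
  else p

lemma consA_of_mem {a : A} {p : PathSpace s r} (h : p ∈ cylV s r (r a)) (i : ℕ) :
    (consA s r a p).seq i = Nat.casesOn i a p.seq := by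
  rw [consA, dif_pos (Eq.symm h)]

lemma measurable_consA (a : A) : Measurable (consA s r a) := by
  refine measurable_of_seq s r fun i S => ?_
  have : {p | (consA s r a p).seq i ∈ S} =
      (cylV s r (r a) ∩ {p | (Nat.casesOn i a p.seq : A) ∈ S}) ∪
        ((cylV s r (r a))ᶜ ∩ {p | p.seq i ∈ S}) := by
    ext p
    by_cases h : p ∈ cylV s r (r a)
    · simp only [Set.mem_ofPred_eq, consA_of_mem h i]
      simp [h]
    · have h' : ¬ r a = s (p.seq 0) := fun e => h e.symm
      simp [consA, h', h]
  rw [this]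
  refine ((measurableSet_cylV s r _).inter ?_).union
    ((measurableSet_cylV s r _).compl.inter (measurableSet_seq s r i S))
  cases i with
  | zero => exact MeasurableSet.const (a ∈ S)
  | succ i => exact measurableSet_seq s r i S

lemma consA_shift {a : A} {p : PathSpace s r} (h : p ∈ cylA s r a) :
    consA s r a (shift s r p) = p := by
  have h0 : p.seq 0 = a := h
  have h1 : shift s r p ∈ cylV s r (r a) := by
    change s (p.seq 1) = r a
    rw [← p.compat 0, h0]
  have : (consA s r a (shift s r p)).seq = p.seq := by
    funext i
    rw [consA_of_mem h1]
    cases i with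
    | zero => exact h0.symm
    | succ i => rfl
  cases p; cases h' : consA s r a _; simp_all

/-- It suffices to prescribe the measures of cylinders: the restriction of `m` to `Z(a)` and the
image of `e^{-βF(a)} m` under `p ↦ ap` then agree on cylinders. -/
lemma preConf_of_cylN [Countable A] {m : Measure (PathSpace s r)}
    (hfin : ∀ v, m (cylV s r v) ≠ ∞)
    (h : ∀ n x, m (cylN s r n x) = cylWt s r F β (fun v => m (cylV s r v)) n x) :
    PreConf s r F β m := by
  refine ⟨hfin, fun a B hB => ?_⟩
  have hA : m.restrict (cylA s r a) =
      wt F β a • (m.restrict (cylV s r (r a))).map (consA s r a) := by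
    apply ext_cylN s r
    · intro b
      refine ne_top_of_le_ne_top (hfin (s b)) ((Measure.restrict_apply_le _ _).trans ?_)
      exact measure_mono (cylA_subset_cylV s r b)
    · intro n x
      rw [Measure.restrict_apply (measurableSet_cylN s r n x), Measure.smul_apply,
        Measure.map_apply (measurable_consA a) (measurableSet_cylN s r n x),
        Measure.restrict_apply (measurable_consA a (measurableSet_cylN s r n x)), smul_eq_mul]
      by_cases hx : x 0 = a
      · have e1 : cylN s r n x ∩ cylA s r a = cylN s r n x := by
          apply Set.inter_eq_left.2
          intro p hp
          change p.seq 0 = a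
          rw [hp 0 (by omega), hx]
        rw [e1, h]
        cases n with
        | zero =>
          have e2 : consA s r a ⁻¹' cylN s r 0 x ∩ cylV s r (r a) = cylV s r (r a) := by
            apply Set.inter_eq_right.2
            intro p hp i hi
            obtain rfl : i = 0 := by omega
            rw [consA_of_mem hp]
            exact hx.symm
          rw [e2]
          simp [cylWt, hx]
        | succ n =>
          by_cases hc : r a = s (x 1)
          · have e2 : consA s r a ⁻¹' cylN s r (n + 1) x ∩ cylV s r (r a) =
                cylN s r n (fun i => x (i + 1)) := by
              ext p
              constructor
              · rintro ⟨h1, h2⟩ i hi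
                have := h1 (i + 1) (by omega)
                rwa [consA_of_mem h2] at this
              · intro hp
                have hv : p ∈ cylV s r (r a) := by
                  change s (p.seq 0) = r a
                  rw [hp 0 (by omega), hc]
                refine ⟨fun i hi => ?_, hv⟩
                rw [consA_of_mem hv]
                cases i with
                | zero => exact hx.symm
                | succ i => exact hp i (by omega)
            rw [e2, h]
            simp only [cylWt]
            have h3 : (∀ i < n + 1, r (x i) = s (x (i + 1))) ↔
                ∀ i < n, r (x (i + 1)) = s (x (i + 1 + 1)) := by
              constructor
              · intro h i hi
                exact h (i + 1) (by omega)
              · intro h i hi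
                cases i with
                | zero => rw [hx]; exact hc
                | succ i => exact h i (by omega)
            by_cases h4 : ∀ i < n, r (x (i + 1)) = s (x (i + 1 + 1))
            · rw [if_pos h4, if_pos (h3.2 h4), Finset.prod_range_succ' _ (n + 1), hx]
              ring
            · rw [if_neg h4, if_neg (fun h => h4 (h3.1 h)), mul_zero]
          · have e2 : consA s r a ⁻¹' cylN s r (n + 1) x ∩ cylV s r (r a) = ∅ := by
              apply Set.eq_empty_of_forall_notMem
              rintro p ⟨h1, h2⟩
              have := h1 1 (by omega)
              rw [consA_of_mem h2] at this
              apply hc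
              rw [← this]; exact Eq.symm h2
            rw [e2, measure_empty, mul_zero, cylWt, if_neg]
            intro h
            exact hc (hx ▸ h 0 (by omega))
      · have e1 : cylN s r n x ∩ cylA s r a = ∅ := by
          apply Set.eq_empty_of_forall_notMem
          rintro p ⟨h1, h2⟩
          exact hx ((h1 0 (by omega)).symm.trans h2)
        have e2 : consA s r a ⁻¹' cylN s r n x ∩ cylV s r (r a) = ∅ := by
          apply Set.eq_empty_of_forall_notMem
          rintro p ⟨h1, h2⟩
          have := h1 0 (by omega)
          rw [consA_of_mem h2] at this
          exact hx this.symm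
        rw [e1, e2]; simp
  have himg : shift s r '' (B ∩ cylA s r a) = consA s r a ⁻¹' B ∩ cylV s r (r a) := by
    ext p
    constructor
    · rintro ⟨q, ⟨h1, h2⟩, rfl⟩
      refine ⟨?_, ?_⟩
      · change consA s r a _ ∈ B
        rwa [consA_shift h2]
      · change s (q.seq 1) = r a
        rw [← q.compat 0]; exact congrArg r h2
    · rintro ⟨h1, h2⟩
      refine ⟨consA s r a p, ⟨h1, consA_of_mem h2 0⟩, ?_⟩
      have : ∀ i, (shift s r (consA s r a p)).seq i = p.seq i := fun i => consA_of_mem h2 (i + 1)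
      cases p; cases h' : shift s r _
      simp only [h'] at this
      congr; funext i; exact this i
  have hB' : m (B ∩ cylA s r a) =
      wt F β a * m (consA s r a ⁻¹' B ∩ cylV s r (r a)) := by
    rw [← Measure.restrict_apply hB, hA, Measure.smul_apply,
      Measure.map_apply (measurable_consA a) hB,
      Measure.restrict_apply (measurable_consA a hB), smul_eq_mul]
  rw [himg, hB', ← mul_assoc, mul_comm (ENNReal.ofReal _), wt_mul_exp, one_mul]

end Conformality

/-! ### Conformal measures from harmonic vectors -/

section Existence

variable {s r : A → V} {F : A → ℝ} {β : ℝ}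

lemma wt_mul_le_of_harmonic {ψ : V → ℝ≥0∞} (hψ : ∀ v, opT s r F β ψ v = ψ v) (a : A) :
    wt F β a * ψ (r a) ≤ ψ (s a) := by
  classical
  rw [← hψ (s a), opT]
  refine le_trans ?_ (ENNReal.le_tsum a)
  rw [if_pos rfl]

open Classical in
/-- The transition probabilities of the Markov chain on arrows obtained from a harmonic vector
by the Doob transform. Arrows ending in a zero of `ψ` are made absorbing; they receive no
mass, so the choice is immaterial. -/
noncomputable def doob {ψ : V → ℝ≥0∞} (hψ : ∀ v, opT s r F β ψ v = ψ v) (hfin : ∀ v, ψ v ≠ ∞)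
    (a : A) : PMF A :=
  if h : ψ (r a) = 0 then PMF.pure a
  else PMF.normalize (fun b => if s b = r a then wt F β b * ψ (r b) else 0)
    (by change opT s r F β ψ (r a) ≠ 0; rwa [hψ])
    (by change opT s r F β ψ (r a) ≠ ∞; rw [hψ]; exact hfin _)

open Classical in
lemma doob_apply {ψ : V → ℝ≥0∞} (hψ : ∀ v, opT s r F β ψ v = ψ v) (hfin : ∀ v, ψ v ≠ ∞)
    {a : A} (h : ψ (r a) ≠ 0) (b : A) :
    doob hψ hfin a b = (if s b = r a then wt F β b * ψ (r b) else 0) / ψ (r a) := by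
  rw [doob, dif_neg h, PMF.normalize_apply, div_eq_mul_inv]
  change _ * (opT s r F β ψ (r a))⁻¹ = _
  rw [hψ]

lemma cylWt_succ {ψ : V → ℝ≥0∞} (hψ : ∀ v, opT s r F β ψ v = ψ v) (hfin : ∀ v, ψ v ≠ ∞)
    (n : ℕ) (x : ℕ → A) :
    cylWt s r F β ψ n x * doob hψ hfin (x n) (x (n + 1)) = cylWt s r F β ψ (n + 1) x := by
  classical
  simp only [cylWt]
  by_cases h : ∀ i < n, r (x i) = s (x (i + 1))
  · rw [if_pos h]
    by_cases h1 : r (x n) = s (x (n + 1))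
    · have h2 : ∀ i < n + 1, r (x i) = s (x (i + 1)) := by
        intro i hi
        rcases Nat.lt_succ_iff_lt_or_eq.1 hi with h' | h'
        · exact h i h'
        · rw [h']; exact h1
      rw [if_pos h2, Finset.prod_range_succ _ (n + 1)]
      by_cases h0 : ψ (r (x n)) = 0
      · have h3 := wt_mul_le_of_harmonic hψ (x (n + 1))
        rw [← h1, h0, nonpos_iff_eq_zero] at h3
        rw [h0, mul_assoc _ (wt F β (x (n + 1))), h3]
        simp
      · have h4 : doob hψ hfin (x n) (x (n + 1)) =
            wt F β (x (n + 1)) * ψ (r (x (n + 1))) / ψ (r (x n)) := by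
          rw [doob_apply _ _ h0, if_pos h1.symm]
        rw [h4, mul_assoc, ENNReal.mul_div_cancel h0 (hfin _), mul_assoc]
    · rw [if_neg (fun h' => h1 (h' n (by omega)))]
      by_cases h0 : ψ (r (x n)) = 0
      · rw [h0]; simp
      · have h4 : doob hψ hfin (x n) (x (n + 1)) = 0 := by
          rw [doob_apply _ _ h0, if_neg (fun h' => h1 h'.symm), ENNReal.zero_div]
        rw [h4, mul_zero]
  · rw [if_neg h, if_neg (fun h' => h fun i hi => h' i (by omega)), zero_mul]

lemma measurableEmbedding_seq [Countable V] :
    @MeasurableEmbedding (PathSpace s r) (ℕ → A) _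
      (@MeasurableSpace.pi ℕ (fun _ => A) (fun _ => ⊤)) PathSpace.seq := by
  let : MeasurableSpace A := ⊤
  have hr : MeasurableSet (Set.range (PathSpace.seq : PathSpace s r → ℕ → A)) := by
    have : Set.range (PathSpace.seq : PathSpace s r → ℕ → A) =
        ⋂ i : ℕ, {y : ℕ → A | r (y i) = s (y (i + 1))} := by
      ext y
      simp only [Set.mem_range, Set.mem_iInter, Set.mem_ofPred_eq]
      constructor
      · rintro ⟨p, rfl⟩ i; exact p.compat i
      · intro h; exact ⟨⟨y, h⟩, rfl⟩
    rw [this]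
    refine MeasurableSet.iInter fun i => ?_
    let : MeasurableSpace V := ⊤
    have h1 : Measurable fun y : ℕ → A => r (y i) :=
      (measurable_from_top (f := r)).comp (measurable_pi_apply i)
    have h2 : Measurable fun y : ℕ → A => s (y (i + 1)) :=
      (measurable_from_top (f := s)).comp (measurable_pi_apply (i + 1))
    exact measurableSet_eq_fun h1 h2
  refine ⟨?_, ?_, ?_⟩
  · rintro ⟨p, hp⟩ ⟨q, hq⟩ h
    simp only at h; subst h; rfl
  · exact comap_measurable _
  · rintro _ ⟨t, ht, rfl⟩
    rw [Set.image_preimage_eq_inter_range]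
    exact ht.inter hr

/-- Every finite harmonic vector is the vector of vertex masses of a conformal measure. -/
lemma exists_preConf [Countable V] [Countable A] {ψ : V → ℝ≥0∞}
    (hψ : ∀ v, opT s r F β ψ v = ψ v) (hfin : ∀ v, ψ v ≠ ∞) :
    ∃ m : Measure (PathSpace s r), PreConf s r F β m ∧ ∀ v, m (cylV s r v) = ψ v := by
  classical
  let : MeasurableSpace A := ⊤
  choose μ hμ0 hμ using fun a => exists_markov_chain (doob hψ hfin) a
  -- The initial distribution gives the arrow `a` the mass that a conformal measure gives to `Z(a)`.
  let M : Measure (ℕ → A) := Measure.sum fun a => (wt F β a * ψ (r a)) • μ a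
  have hM : ∀ n x, M {y | ∀ i ≤ n, y i = x i} = cylWt s r F β ψ n x := by
    intro n x
    have hmeas : MeasurableSet {y : ℕ → A | ∀ i ≤ n, y i = x i} := by
      have : {y : ℕ → A | ∀ i ≤ n, y i = x i} =
          ⋂ (i : ℕ) (_ : i ≤ n), (fun y => y i) ⁻¹' {x i} := by ext y; simp
      rw [this]
      exact MeasurableSet.iInter fun i => MeasurableSet.iInter fun _ =>
        measurable_pi_apply i (MeasurableSpace.measurableSet_top)
    rw [Measure.sum_apply _ hmeas, tsum_eq_single (x 0)]
    · rw [Measure.smul_apply, hμ _ n x rfl, smul_eq_mul]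
      clear hmeas
      induction n with
      | zero => simp [cylWt]
      | succ n ih => rw [Finset.prod_range_succ, ← mul_assoc, ih, cylWt_succ]
    · intro a ha
      have : μ a {y | ∀ i ≤ n, y i = x i} = 0 := by
        refine measure_mono_null ?_ (hμ0 a)
        intro y hy h
        exact ha (h.symm.trans (hy 0 (by omega)))
      simp [this]
  -- A sequence which is not a path lies in one of countably many cylinders of weight zero.
  have hnull : M (Set.range (PathSpace.seq : PathSpace s r → ℕ → A))ᶜ = 0 := by
    have hsub : (Set.range (PathSpace.seq : PathSpace s r → ℕ → A))ᶜ ⊆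
        ⋃ (n : ℕ) (z : Fin (n + 1 + 1) → A) (_ : cylWt s r F β ψ (n + 1) (extWord z) = 0),
          {y | ∀ i ≤ n + 1, y i = extWord z i} := by
      intro y hy
      have : ∃ n, r (y n) ≠ s (y (n + 1)) := by
        by_contra! h
        exact hy ⟨⟨y, h⟩, rfl⟩
      obtain ⟨n, hn⟩ := this
      simp only [Set.mem_iUnion]
      refine ⟨n, fun i => y i, ?_, fun i hi => (extWord_apply y hi).symm⟩
      rw [cylWt, if_neg]
      intro h
      have := h n (by omega)
      rw [extWord_apply y (by omega), extWord_apply y le_rfl] at this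
      exact hn this
    refine measure_mono_null hsub ?_
    refine measure_iUnion_null fun n => measure_iUnion_null fun z => measure_iUnion_null fun h => ?_
    rw [hM, h]
  have hcyl : ∀ n x, M.comap (PathSpace.seq : PathSpace s r → ℕ → A) (cylN s r n x) =
      cylWt s r F β ψ n x := by
    intro n x
    rw [measurableEmbedding_seq.comap_apply, ← hM n x]
    have : (PathSpace.seq : PathSpace s r → ℕ → A) '' cylN s r n x =
        {y | ∀ i ≤ n, y i = x i} ∩ Set.range (PathSpace.seq : PathSpace s r → ℕ → A) := by
      rw [← Set.image_preimage_eq_inter_range]; rfl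
    rw [this]
    exact measure_inter_conull' (measure_mono_null (fun y hy => hy.2) hnull)
  have hV : ∀ v, M.comap (PathSpace.seq : PathSpace s r → ℕ → A) (cylV s r v) = ψ v := by
    intro v
    have := measure_cylV_inter s r (M.comap (PathSpace.seq : PathSpace s r → ℕ → A)) v
      MeasurableSet.univ
    simp only [Set.inter_univ] at this
    rw [this, ← hψ v, opT]
    refine tsum_congr fun a => ?_
    split_ifs
    · have h := hcyl 0 (fun _ => a)
      rw [cylN_zero] at h
      rw [h]; simp [cylWt]
    · rfl
  refine ⟨M.comap PathSpace.seq, preConf_of_cylN (fun v => by rw [hV]; exact hfin v) ?_, hV⟩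
  intro n x
  rw [hcyl]
  simp only [hV]

end Existence

/-! ### The Green function and harmonic vectors -/

section Potential

variable {s r : A → V} {F : A → ℝ} {β : ℝ}

lemma tsum_Amat_mul (g : V → ℝ≥0∞) (v : V) :
    ∑' w, Amat s r F β v w * g w = opT s r F β g v := by
  classical
  have h1 : ∀ w, Amat s r F β v w * g w =
      ∑' a : A, if s a = v ∧ r a = w then wt F β a * g w else 0 := by
    intro w
    rw [Amat, ← ENNReal.tsum_mul_right]
    change ∑' a : {a : A | s a = v ∧ r a = w}, (fun a : A => wt F β a * g w) a = _
    refine (tsum_subtype {a : A | s a = v ∧ r a = w} (fun a : A => wt F β a * g w)).trans ?_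
    refine tsum_congr fun a => ?_
    simp [Set.indicator_apply]
  simp_rw [h1]
  rw [ENNReal.tsum_comm, opT]
  refine tsum_congr fun a => ?_
  rw [tsum_eq_single (r a)]
  · simp
  · intro w hw
    rw [if_neg]
    exact fun h => hw h.2.symm

lemma opT_mono {g h : V → ℝ≥0∞} {v : V} (hgh : ∀ a, s a = v → g (r a) ≤ h (r a)) :
    opT s r F β g v ≤ opT s r F β h v := by
  classical
  refine ENNReal.tsum_le_tsum fun a => ?_
  split_ifs with ha
  · gcongr; exact hgh a ha
  · exact le_rfl

lemma opT_tsum {ι : Type*} (g : ι → V → ℝ≥0∞) (v : V) :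
    opT s r F β (fun w => ∑' i, g i w) v = ∑' i, opT s r F β (g i) v := by
  classical
  simp only [opT]
  rw [ENNReal.tsum_comm]
  refine tsum_congr fun a => ?_
  split_ifs
  · rw [ENNReal.tsum_mul_left]
  · simp

lemma opT_finset_sum {ι : Type*} (t : Finset ι) (g : ι → V → ℝ≥0∞) (v : V) :
    opT s r F β (fun w => ∑ i ∈ t, g i w) v = ∑ i ∈ t, opT s r F β (g i) v := by
  simp_rw [← Finset.tsum_subtype]
  exact opT_tsum (fun i : t => g i) v

lemma opT_mul_right (g : V → ℝ≥0∞) (c : ℝ≥0∞) (v : V) :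
    opT s r F β (fun w => g w * c) v = opT s r F β g v * c := by
  classical
  simp only [opT]
  rw [← ENNReal.tsum_mul_right]
  refine tsum_congr fun a => ?_
  split_ifs
  · rw [mul_assoc]
  · simp

lemma Apow_succ (n : ℕ) (v w : V) :
    Apow s r F β (n + 1) v w = opT s r F β (fun u => Apow s r F β n u w) v := by
  rw [← tsum_Amat_mul]; rfl

open Classical in
lemma Apow_zero (v w : V) : Apow s r F β 0 v w = if w = v then 1 else 0 := by
  simp [Apow, matPow, Set.indicator_apply]

open Classical in
lemma Green_eq (v w : V) : Green s r F β v w =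
    (if w = v then 1 else 0) + opT s r F β (fun u => Green s r F β u w) v := by
  simp only [Green]
  rw [tsum_eq_zero_add' ENNReal.summable, Apow_zero, opT_tsum]
  simp_rw [Apow_succ]

lemma tsum_Apow_mul_Apow (n k : ℕ) (v w : V) :
    ∑' u, Apow s r F β n v u * Apow s r F β k u w = Apow s r F β (n + k) v w := by
  classical
  induction n generalizing v with
  | zero =>
    rw [tsum_eq_single v]
    · simp [Apow_zero]
    · intro u hu; simp [Apow_zero, hu]
  | succ n ih =>
    simp_rw [Apow_succ, ← opT_mul_right]
    rw [← opT_tsum]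
    simp_rw [ih]
    rw [← Apow_succ]
    congr 1; omega

lemma tsum_Apow_mul_Green (n : ℕ) (v w : V) :
    ∑' u, Apow s r F β n v u * Green s r F β u w = ∑' k, Apow s r F β (k + n) v w := by
  simp_rw [Green, ← ENNReal.tsum_mul_left]
  rw [ENNReal.tsum_comm]
  refine tsum_congr fun k => ?_
  rw [tsum_Apow_mul_Apow, add_comm]

lemma Apow_mul_Green_le (n : ℕ) (v u w : V) :
    Apow s r F β n v u * Green s r F β u w ≤ Green s r F β v w := by
  refine (ENNReal.le_tsum (f := fun u => Apow s r F β n v u * Green s r F β u w) u).trans ?_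
  rw [tsum_Apow_mul_Green]
  exact ENNReal.tsum_comp_le_tsum_of_injective (add_left_injective n) _

lemma exists_Apow_ne_zero {v w : V} (h : Green s r F β v w ≠ 0) :
    ∃ n, Apow s r F β n v w ≠ 0 := by
  by_contra! hzero
  exact h (by simp [Green, hzero])

/-- Finiteness of `G(v₀, ·)` spreads to all rows, as `v₀` is joined to every vertex. -/
lemma Green_ne_top {v₀ : V}
    (hv₀ : ∀ v : V, Green s r F β v₀ v ≠ 0 ∧ Green s r F β v₀ v ≠ ∞) (v w : V) :
    Green s r F β v w ≠ ∞ := by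
  obtain ⟨n, hn⟩ := exists_Apow_ne_zero (hv₀ v).1
  intro h
  have := Apow_mul_Green_le (s := s) (r := r) (F := F) (β := β) n v₀ v w
  rw [h, ENNReal.mul_top hn, top_le_iff] at this
  exact (hv₀ w).2 this

lemma tsum_Apow_mul_harmonic {ψ : V → ℝ≥0∞} (hψ : ∀ v, opT s r F β ψ v = ψ v) (n : ℕ) (v : V) :
    ∑' u, Apow s r F β n v u * ψ u = ψ v := by
  classical
  induction n generalizing v with
  | zero =>
    rw [tsum_eq_single v]
    · simp [Apow_zero]
    · intro u hu; simp [Apow_zero, hu]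
  | succ n ih =>
    simp_rw [Apow_succ, ← opT_mul_right]
    rw [← opT_tsum]
    simp_rw [ih]
    exact hψ v

lemma Apow_mul_le_harmonic {ψ : V → ℝ≥0∞} (hψ : ∀ v, opT s r F β ψ v = ψ v) (n : ℕ) (v u : V) :
    Apow s r F β n v u * ψ u ≤ ψ v := by
  rw [← tsum_Apow_mul_harmonic hψ n v]
  exact ENNReal.le_tsum u

lemma PreConf.harmonic [Countable A] {m : Measure (PathSpace s r)} (hm : PreConf s r F β m)
    (v : V) : opT s r F β (fun v => m (cylV s r v)) v = m (cylV s r v) := by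
  have := measure_cylV_inter s r m v MeasurableSet.univ
  simp only [Set.inter_univ] at this
  rw [this, opT]
  simp_rw [hm.measure_cylA]

/-- The mass of the paths which start at `v` and sit at `u` at time `n`. -/
lemma PreConf.measure_visit [Countable A] {m : Measure (PathSpace s r)}
    (hm : PreConf s r F β m) (n : ℕ) (v u : V) :
    m (cylV s r v ∩ {p | s (p.seq n) = u}) = Apow s r F β n v u * m (cylV s r u) := by
  classical
  induction n generalizing v with
  | zero =>
    rw [Apow_zero]
    split_ifs with h
    · subst h
      rw [one_mul]
      exact congrArg m (Set.inter_self (cylV s r u))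
    · rw [zero_mul]
      have : cylV s r v ∩ {p | s (p.seq 0) = u} = ∅ := by
        apply Set.eq_empty_of_forall_notMem
        rintro p ⟨h1, h2⟩
        exact h (Eq.trans (Eq.symm h2) h1)
      rw [this, measure_empty]
  | succ n ih =>
    refine (measure_cylV_inter s r m v (measurableSet_vert s r (n + 1) {u})).trans ?_
    rw [Apow_succ, ← opT_mul_right, opT]
    refine tsum_congr fun a => ?_
    split_ifs
    · rw [← ih]
      exact hm.measure_cylA_inter a (measurableSet_vert s r n {u})
    · rfl

end Potential

/-! ### Paths leading to a given wandering path -/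

section Ends

variable {s r : A → V} {F : A → ℝ} {β : ℝ}

/-- The vertex `w` can be joined to some `s(e_n)`, `n ≥ N`, by a finite path avoiding `F₀`. -/
def Reach (s r : A → V) (e : PathSpace s r) (F₀ : Finset V) (N : ℕ) (w : V) : Prop :=
  ∃ n : ℕ, N ≤ n ∧ ∃ μ : FinPath s r, μ.src = w ∧ finRng s r μ = s (e.seq n) ∧
    ∀ v ∈ finVerts s r μ, v ∉ F₀

lemma leads_iff {p e : PathSpace s r} :
    Leads s r p e ↔ ∀ (F₀ : Finset V) (N : ℕ), ∃ n, N ≤ n ∧ Reach s r e F₀ N (s (p.seq n)) := by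
  constructor
  · intro h F₀ N
    obtain ⟨n₁, n₂, h1, h2, h3⟩ := h F₀ N
    exact ⟨n₁, h1, n₂, h2, h3⟩
  · intro h F₀ N
    obtain ⟨n₁, h1, n₂, h2, h3⟩ := h F₀ N
    exact ⟨n₁, n₂, h1, h2, h3⟩

variable {e : PathSpace s r} {F₀ : Finset V} {N : ℕ}

lemma reach_self {n : ℕ} (hn : N ≤ n) (h : s (e.seq n) ∉ F₀) :
    Reach s r e F₀ N (s (e.seq n)) := by
  refine ⟨n, hn, ⟨s (e.seq n), [], fun h => (h rfl).elim, List.isChain_nil⟩, rfl, rfl, ?_⟩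
  intro v hv
  simp [finVerts] at hv
  rw [hv]; exact h

lemma reach_step {a : A} (ha : s a ∉ F₀) (h : Reach s r e F₀ N (r a)) :
    Reach s r e F₀ N (s a) := by
  obtain ⟨n, hn, ⟨src, l, hsrc, hl⟩, h1, h2, h3⟩ := h
  simp only at h1
  subst h1
  refine ⟨n, hn, ⟨s a, a :: l, fun _ => rfl, ?_⟩, rfl, ?_, ?_⟩
  · refine List.isChain_cons.2 ⟨?_, hl⟩
    intro b hb
    have hne : l ≠ [] := by rintro rfl; simp at hb
    rw [List.head?_eq_some_head hne, Option.mem_some_iff] at hb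
    rw [← hb]; exact (hsrc hne).symm
  · refine Eq.trans ?_ h2
    cases l with
    | nil => rfl
    | cons b l => simp [finRng, List.getLast?_cons]
  · intro v hv
    rcases hv with hv | ⟨b, hb, hv⟩
    · rw [Set.mem_singleton_iff.1 hv]; exact ha
    · rcases List.mem_cons.1 hb with rfl | hb
      · rcases hv with rfl | rfl
        · exact ha
        · exact h3 _ (Or.inl rfl)
      · exact h3 v (Or.inr ⟨b, hb, hv⟩)

lemma reach_of_path (p : PathSpace s r) (n : ℕ) (h : ∀ i < n, s (p.seq i) ∉ F₀)
    (hn : Reach s r e F₀ N (s (p.seq n))) : Reach s r e F₀ N (s (p.seq 0)) := by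
  induction n with
  | zero => exact hn
  | succ n ih =>
    refine ih (fun i hi => h i (by omega)) (reach_step (h n (by omega)) ?_)
    rw [p.compat n]; exact hn

lemma leads_self (he : Wandering s r e) : Leads s r e e := by
  rw [leads_iff]
  intro F₀ N
  obtain ⟨K, hK⟩ := he F₀
  exact ⟨max N K, le_max_left _ _,
    reach_self (le_max_left _ _) (hK _ (le_max_right _ _))⟩

/-- If every path from `w` to the tail of `e` meets `F₀`, the Green function at points of that
tail is dominated by splitting paths at a visit to `F₀`. -/
lemma green_le_of_not_reach {n : ℕ} (hn : N ≤ n) {w : V} (hw : ¬ Reach s r e F₀ N w) :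
    Green s r F β w (s (e.seq n)) ≤
      ∑ u ∈ F₀, Green s r F β w u * Green s r F β u (s (e.seq n)) := by
  classical
  set z := s (e.seq n) with hz
  -- Induction on the number of terms in the series for the Green function.
  have key : ∀ (k : ℕ) (w : V), ¬ Reach s r e F₀ N w →
      ∑ i ∈ Finset.range k, Apow s r F β i w z ≤
        ∑ u ∈ F₀, Green s r F β w u * Green s r F β u z := by
    intro k
    induction k with
    | zero => intro w _; simp
    | succ k ih =>
      intro w hw
      by_cases hF : w ∈ F₀
      · calc ∑ i ∈ Finset.range (k + 1), Apow s r F β i w z ≤ Green s r F β w z :=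
              ENNReal.sum_le_tsum _
          _ = 1 * Green s r F β w z := (one_mul _).symm
          _ ≤ Green s r F β w w * Green s r F β w z := by
              gcongr
              rw [Green_eq w w, if_pos rfl]
              exact le_self_add
          _ ≤ _ := Finset.single_le_sum
              (f := fun u => Green s r F β w u * Green s r F β u z) (fun _ _ => zero_le) hF
      · have hwz : z ≠ w := by
          rintro rfl
          exact hw (reach_self hn hF)
        rw [Finset.sum_range_succ', Apow_zero, if_neg hwz, add_zero]
        simp_rw [Apow_succ]
        rw [← opT_finset_sum]
        calc opT s r F β (fun u => ∑ i ∈ Finset.range k, Apow s r F β i u z) w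
            ≤ opT s r F β (fun w => ∑ u ∈ F₀, Green s r F β w u * Green s r F β u z) w := by
              refine opT_mono fun a ha => ih _ fun h => hw ?_
              rw [← ha]
              exact reach_step (by rwa [ha]) h
          _ = ∑ u ∈ F₀, opT s r F β (fun w => Green s r F β w u) w * Green s r F β u z := by
              rw [opT_finset_sum]
              simp_rw [opT_mul_right]
          _ ≤ _ := by
              refine Finset.sum_le_sum fun u _ => ?_
              gcongr
              rw [Green_eq w u]
              exact le_add_self
  rw [Green, ENNReal.tsum_eq_iSup_nat]
  exact iSup_le fun k => key k w hw

/-- `ψ` is dominated, at vertices from which the tail of `e` cannot be reached outside `F₀`,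
by the potential of its restriction to `F₀`. This is the closed condition which characterises
the harmonic vectors whose measures are concentrated on paths leading to `e`. -/
def Dom (s r : A → V) (F : A → ℝ) (β : ℝ) (e : PathSpace s r) (ψ : V → ℝ≥0∞) : Prop :=
  ∀ (F₀ : Finset V) (N : ℕ) (w : V), ¬ Reach s r e F₀ N w →
    ψ w ≤ ∑ u ∈ F₀, Green s r F β w u * ψ u

/-- A path from `w` leading to `e` must visit `F₀` when the tail of `e` is not reachable from `w`
outside `F₀`; the mass of the paths from `w` visiting `u` is at most `G(w,u) m(Z(u))`. -/
lemma dom_of_ae_leads [Countable A] {m : Measure (PathSpace s r)}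
    (hm : PreConf s r F β m) (h : ∀ᵐ x ∂m, Leads s r x e) :
    Dom s r F β e (fun v => m (cylV s r v)) := by
  intro F₀ N w hw
  have hsub : cylV s r w ≤ᵐ[m]
      (⋃ u ∈ F₀, ⋃ n : ℕ, cylV s r w ∩ {p | s (p.seq n) = u} : Set (PathSpace s r)) := by
    filter_upwards [h] with x hx hxw
    obtain ⟨n, -, hn⟩ := leads_iff.1 hx F₀ N
    have : ∃ i, s (x.seq i) ∈ F₀ := by
      by_contra! hi
      apply hw
      rw [← show s (x.seq 0) = w from hxw]
      exact reach_of_path x n (fun i _ => hi i) hn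
    obtain ⟨i, hi⟩ := this
    exact Set.mem_biUnion hi (Set.mem_iUnion.2 ⟨i, hxw, rfl⟩)
  refine (measure_mono_ae hsub).trans ((measure_biUnion_finset_le _ _).trans ?_)
  refine Finset.sum_le_sum fun u _ => (measure_iUnion_le _).trans ?_
  simp_rw [hm.measure_visit]
  rw [ENNReal.tsum_mul_right]
  rfl

lemma ae_of_ae_cylV [Countable V] {m : Measure (PathSpace s r)} {P : PathSpace s r → Prop}
    (h : ∀ v, m (cylV s r v ∩ {x | ¬ P x}) = 0) : ∀ᵐ x ∂m, P x := by
  rw [ae_iff]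
  refine measure_mono_null ?_ (measure_iUnion_null h)
  intro x hx
  exact Set.mem_iUnion.2 ⟨s (x.seq 0), rfl, hx⟩

/-- Borel–Cantelli: paths are almost surely transient. -/
lemma ae_wandering [Countable V] [Countable A] {m : Measure (PathSpace s r)}
    (hm : PreConf s r F β m) (hG : ∀ v w, Green s r F β v w ≠ ∞) :
    ∀ᵐ x ∂m, Wandering s r x := by
  have h1 : ∀ u : V, ∀ᵐ x ∂m, ∀ᶠ n in atTop, s (x.seq n) ≠ u := by
    intro u
    refine ae_of_ae_cylV fun v => ?_
    have h2 : ∑' n, m (cylV s r v ∩ {p | s (p.seq n) = u}) ≠ ∞ := by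
      simp_rw [hm.measure_visit]
      rw [ENNReal.tsum_mul_right]
      exact ENNReal.mul_ne_top (hG v u) (hm.1 u)
    have h3 := ae_eventually_notMem h2
    rw [ae_iff] at h3
    refine measure_mono_null ?_ h3
    rintro x ⟨hx, hx'⟩ h
    exact hx' (h.mono fun n hn hn' => hn ⟨hx, hn'⟩)
  rw [← ae_all_iff] at h1
  filter_upwards [h1] with x hx F₀
  have : ∀ᶠ n in atTop, ∀ u ∈ F₀, s (x.seq n) ≠ u :=
    (Filter.eventually_all_finset F₀).2 fun u _ => hx u
  obtain ⟨N, hN⟩ := eventually_atTop.1 this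
  exact ⟨N, fun i hi hmem => hN i hi _ hmem rfl⟩

/-- Conversely, domination makes the mass of the paths from `v` which from time `N` on only see
vertices not reaching the tail of `e` smaller than a tail of the Green series. -/
lemma ae_leads_of_dom [Countable V] [Countable A] {m : Measure (PathSpace s r)}
    (hm : PreConf s r F β m) (hG : ∀ v w, Green s r F β v w ≠ ∞)
    (hdom : Dom s r F β e (fun v => m (cylV s r v))) :
    ∀ᵐ x ∂m, Leads s r x e := by
  simp_rw [leads_iff]
  rw [ae_all_iff]; intro F₀
  rw [ae_all_iff]; intro N
  refine ae_of_ae_cylV fun v => ?_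
  have hbound : ∀ n ≥ N,
      m (cylV s r v ∩ {x | ¬ ∃ n, N ≤ n ∧ Reach s r e F₀ N (s (x.seq n))}) ≤
        ∑ u ∈ F₀, (∑' k, Apow s r F β (k + n) v u) * m (cylV s r u) := by
    intro n hn
    classical
    calc m (cylV s r v ∩ {x | ¬ ∃ n, N ≤ n ∧ Reach s r e F₀ N (s (x.seq n))})
        ≤ m (⋃ w : V, if Reach s r e F₀ N w then ∅
            else cylV s r v ∩ {p | s (p.seq n) = w}) := by
          refine measure_mono ?_
          rintro x ⟨hx, hx'⟩
          refine Set.mem_iUnion.2 ⟨s (x.seq n), ?_⟩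
          rw [if_neg fun h => hx' ⟨n, hn, h⟩]
          exact ⟨hx, rfl⟩
      _ ≤ ∑' w : V, m (if Reach s r e F₀ N w then ∅
            else cylV s r v ∩ {p | s (p.seq n) = w}) := measure_iUnion_le _
      _ ≤ ∑' w : V, ∑ u ∈ F₀, Apow s r F β n v w * Green s r F β w u * m (cylV s r u) := by
          refine ENNReal.tsum_le_tsum fun w => ?_
          split_ifs with h
          · simp
          · rw [hm.measure_visit]
            simp_rw [mul_assoc]
            rw [← Finset.mul_sum]
            gcongr
            exact hdom F₀ N w h
      _ = _ := by
          rw [Summable.tsum_finsetSum fun _ _ => ENNReal.summable]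
          refine Finset.sum_congr rfl fun u _ => ?_
          rw [ENNReal.tsum_mul_right, tsum_Apow_mul_Green]
  have hlim : Tendsto (fun n => ∑ u ∈ F₀, (∑' k, Apow s r F β (k + n) v u) * m (cylV s r u))
      atTop (𝓝 0) := by
    have : (0 : ℝ≥0∞) = ∑ u ∈ F₀, 0 * m (cylV s r u) := by simp
    rw [this]
    refine tendsto_finsetSum _ fun u _ => ?_
    exact ENNReal.Tendsto.mul_const (ENNReal.tendsto_sum_nat_add _ (hG v u)) (Or.inr (hm.1 u))
  exact le_antisymm (ge_of_tendsto hlim (eventually_atTop.2 ⟨N, hbound⟩)) zero_le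

end Ends

/-! ### Sums and uniqueness of conformal measures -/

section Uniqueness

variable {s r : A → V} {F : A → ℝ} {β : ℝ}

lemma PreConf.add {m m' : Measure (PathSpace s r)} (h : PreConf s r F β m)
    (h' : PreConf s r F β m') : PreConf s r F β (m + m') := by
  refine ⟨fun v => ?_, fun a B hB => ?_⟩
  · rw [Measure.add_apply]; exact ENNReal.add_ne_top.2 ⟨h.1 v, h'.1 v⟩
  · rw [Measure.add_apply, Measure.add_apply, h.2 a B hB, h'.2 a B hB, mul_add]

lemma PreConf.smul {m : Measure (PathSpace s r)} (h : PreConf s r F β m) (c : ℝ≥0) :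
    PreConf s r F β ((c : ℝ≥0∞) • m) := by
  refine ⟨fun v => ?_, fun a B hB => ?_⟩
  · rw [Measure.smul_apply]; exact ENNReal.mul_ne_top ENNReal.coe_ne_top (h.1 v)
  · rw [Measure.smul_apply, Measure.smul_apply, h.2 a B hB, smul_eq_mul, smul_eq_mul,
      mul_left_comm]

/-- A conformal measure is determined by its vertex masses. -/
lemma PreConf.ext [Countable A] {m m' : Measure (PathSpace s r)} (h : PreConf s r F β m)
    (h' : PreConf s r F β m') (hv : ∀ v, m (cylV s r v) = m' (cylV s r v)) : m = m' := by
  apply ext_cylN s r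
  · intro a
    exact ne_top_of_le_ne_top (h.1 (s a)) (measure_mono (cylA_subset_cylV s r a))
  · intro n x
    rw [h.measure_cylN, h'.measure_cylN]
    simp only [hv]

end Uniqueness

/-! ### The compact set of normalized harmonic vectors -/

section Cone

variable {s r : A → V} {F : A → ℝ} {β : ℝ}

/-- The cone of nonnegative real harmonic vectors satisfying the domination property `Dom`,
described by linear conditions on finitely many coordinates each. -/
def HCone (s r : A → V) (F : A → ℝ) (β : ℝ) (hrow : ∀ v : V, {a : A | s a = v}.Finite)
    (e : PathSpace s r) : Set (V → ℝ) :=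
  {f | (∀ v, 0 ≤ f v) ∧
    (∀ v, f v = ∑ a ∈ (hrow v).toFinset, Real.exp (-(β * F a)) * f (r a)) ∧
    ∀ (F₀ : Finset V) (N : ℕ) (w : V), ¬ Reach s r e F₀ N w →
      f w ≤ ∑ u ∈ F₀, (Green s r F β w u).toReal * f u}

lemma harmonic_iff (hrow : ∀ v : V, {a : A | s a = v}.Finite) {f : V → ℝ} (hf : ∀ v, 0 ≤ f v)
    (v : V) : opT s r F β (fun v => ENNReal.ofReal (f v)) v = ENNReal.ofReal (f v) ↔
      f v = ∑ a ∈ (hrow v).toFinset, Real.exp (-(β * F a)) * f (r a) := by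
  classical
  have h1 : opT s r F β (fun v => ENNReal.ofReal (f v)) v =
      ENNReal.ofReal (∑ a ∈ (hrow v).toFinset, Real.exp (-(β * F a)) * f (r a)) := by
    rw [opT, tsum_eq_sum (s := (hrow v).toFinset),
      ENNReal.ofReal_sum_of_nonneg fun a _ => mul_nonneg (Real.exp_pos _).le (hf _)]
    · refine Finset.sum_congr rfl fun a ha => ?_
      rw [if_pos (by simpa using ha), ENNReal.ofReal_mul (Real.exp_pos _).le, wt]
    · intro a ha
      rw [if_neg (by simpa using ha)]
  rw [h1, ENNReal.ofReal_eq_ofReal_iff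
    (Finset.sum_nonneg fun a _ => mul_nonneg (Real.exp_pos _).le (hf _)) (hf v)]
  exact eq_comm

lemma dom_iff (hG : ∀ v w, Green s r F β v w ≠ ∞) {f : V → ℝ} (hf : ∀ v, 0 ≤ f v)
    (F₀ : Finset V) (w : V) :
    ENNReal.ofReal (f w) ≤ ∑ u ∈ F₀, Green s r F β w u * ENNReal.ofReal (f u) ↔
      f w ≤ ∑ u ∈ F₀, (Green s r F β w u).toReal * f u := by
  have h1 : ∑ u ∈ F₀, Green s r F β w u * ENNReal.ofReal (f u) =
      ENNReal.ofReal (∑ u ∈ F₀, (Green s r F β w u).toReal * f u) := by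
    rw [ENNReal.ofReal_sum_of_nonneg fun u _ => mul_nonneg ENNReal.toReal_nonneg (hf _)]
    refine Finset.sum_congr rfl fun u _ => ?_
    rw [ENNReal.ofReal_mul ENNReal.toReal_nonneg, ENNReal.ofReal_toReal (hG w u)]
  rw [h1, ENNReal.ofReal_le_ofReal_iff
    (Finset.sum_nonneg fun u _ => mul_nonneg ENNReal.toReal_nonneg (hf _))]

variable {hrow : ∀ v : V, {a : A | s a = v}.Finite} {e : PathSpace s r}

lemma HCone.smul {f : V → ℝ} (hf : f ∈ HCone s r F β hrow e) {c : ℝ} (hc : 0 ≤ c) :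
    c • f ∈ HCone s r F β hrow e := by
  obtain ⟨h1, h2, h3⟩ := hf
  refine ⟨fun v => mul_nonneg hc (h1 v), fun v => ?_, fun F₀ N w hw => ?_⟩
  · simp only [Pi.smul_apply, smul_eq_mul]
    rw [h2 v, Finset.mul_sum]
    exact Finset.sum_congr rfl fun a _ => by ring
  · simp only [Pi.smul_apply, smul_eq_mul]
    refine (mul_le_mul_of_nonneg_left (h3 F₀ N w hw) hc).trans_eq ?_
    rw [Finset.mul_sum]
    exact Finset.sum_congr rfl fun a _ => by ring

lemma isClosed_HCone : IsClosed (HCone s r F β hrow e) := by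
  have h : HCone s r F β hrow e =
      (⋂ v, {f | 0 ≤ f v}) ∩
      ((⋂ v, {f | f v = ∑ a ∈ (hrow v).toFinset, Real.exp (-(β * F a)) * f (r a)}) ∩
      ⋂ (F₀ : Finset V) (N : ℕ) (w : V) (_ : ¬ Reach s r e F₀ N w),
        {f | f w ≤ ∑ u ∈ F₀, (Green s r F β w u).toReal * f u}) := by
    ext f
    simp only [HCone, Set.mem_inter_iff, Set.mem_iInter, Set.mem_ofPred_eq]
  rw [h]
  refine (isClosed_iInter fun v => ?_).inter ((isClosed_iInter fun v => ?_).inter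
    (isClosed_iInter fun F₀ => isClosed_iInter fun N => isClosed_iInter fun w =>
      isClosed_iInter fun _ => ?_))
  · exact isClosed_le continuous_const (continuous_apply v)
  · exact isClosed_eq (continuous_apply v) (by fun_prop)
  · exact isClosed_le (continuous_apply w) (by fun_prop)

/-- The base of the cone `HCone`, normalized at `v₀`. -/
def HBase (s r : A → V) (F : A → ℝ) (β : ℝ) (hrow : ∀ v : V, {a : A | s a = v}.Finite)
    (e : PathSpace s r) (v₀ : V) : Set (V → ℝ) :=
  {f | f ∈ HCone s r F β hrow e ∧ f v₀ = 1}

/-- Coordinatewise bounds, both for `HBase` and for the Martin kernels: with `n` such that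
`A(β)ⁿ_{v₀,v} ≠ 0`, the bound at `v` is `1 / A(β)ⁿ_{v₀,v}`. -/
lemma exists_box {v₀ : V} (hv₀ : ∀ v : V, Green s r F β v₀ v ≠ 0 ∧ Green s r F β v₀ v ≠ ∞) :
    ∃ b : V → ℝ, (∀ f ∈ HBase s r F β hrow e v₀, ∀ v, f v ≤ b v) ∧
      ∀ v w, (Green s r F β v w / Green s r F β v₀ w).toReal ≤ b v := by
  choose n hn using fun v => exists_Apow_ne_zero (hv₀ v).1
  have hinv : ∀ v, (Apow s r F β (n v) v₀ v)⁻¹ ≠ ∞ := fun v => ENNReal.inv_ne_top.2 (hn v)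
  have hA : ∀ v, Apow s r F β (n v) v₀ v ≠ ∞ := fun v =>
    ne_top_of_le_ne_top (hv₀ v).2 (ENNReal.le_tsum (f := fun n => Apow s r F β n v₀ v) (n v))
  refine ⟨fun v => ((Apow s r F β (n v) v₀ v)⁻¹).toReal, ?_, ?_⟩
  · rintro f ⟨⟨h1, h2, -⟩, h3⟩ v
    have h4 := Apow_mul_le_harmonic (fun v => (harmonic_iff hrow h1 v).2 (h2 v)) (n v) v₀ v
    rw [h3, ENNReal.ofReal_one] at h4
    rw [← ENNReal.ofReal_le_iff_le_toReal (hinv v), ENNReal.le_inv_iff_mul_le, mul_comm]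
    exact h4
  · intro v w
    refine ENNReal.toReal_mono (hinv v) ?_
    refine ENNReal.div_le_of_le_mul ?_
    have h4 := Apow_mul_Green_le (s := s) (r := r) (F := F) (β := β) (n v) v₀ v w
    calc Green s r F β v w
        = (Apow s r F β (n v) v₀ v)⁻¹ * (Apow s r F β (n v) v₀ v * Green s r F β v w) := by
          rw [← mul_assoc, ENNReal.inv_mul_cancel (hn v) (hA v), one_mul]
      _ ≤ _ := by gcongr

lemma isCompact_HBase {v₀ : V}
    (hv₀ : ∀ v : V, Green s r F β v₀ v ≠ 0 ∧ Green s r F β v₀ v ≠ ∞) :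
    IsCompact (HBase s r F β hrow e v₀) := by
  obtain ⟨b, hb, -⟩ := exists_box (hrow := hrow) (e := e) hv₀
  refine (isCompact_univ_pi fun v => isCompact_Icc (a := (0 : ℝ)) (b := b v)).of_isClosed_subset
    (isClosed_HCone.inter (isClosed_eq (continuous_apply v₀) continuous_const)) ?_
  intro f hf v _
  exact ⟨hf.1.1 v, hb f hf v⟩

/-- Limit points of the Martin kernels along `e` lie in `HBase`. -/
lemma nonempty_HBase {v₀ : V}
    (hv₀ : ∀ v : V, Green s r F β v₀ v ≠ 0 ∧ Green s r F β v₀ v ≠ ∞) (he : Wandering s r e) :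
    (HBase s r F β hrow e v₀).Nonempty := by
  classical
  obtain ⟨b, -, hb⟩ := exists_box (hrow := hrow) (e := e) hv₀
  have hG := Green_ne_top hv₀
  let h : ℕ → V → ℝ≥0∞ := fun k v =>
    Green s r F β v (s (e.seq k)) / Green s r F β v₀ (s (e.seq k))
  let g : ℕ → V → ℝ := fun k v => (h k v).toReal
  have hh : ∀ k v, h k v ≠ ∞ := fun k v => ENNReal.div_ne_top (hG _ _) (hv₀ _).1
  have hg : ∀ k, (fun v => ENNReal.ofReal (g k v)) = h k := fun k =>
    funext fun v => ENNReal.ofReal_toReal (hh k v)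
  have hg0 : ∀ k v, 0 ≤ g k v := fun k v => ENNReal.toReal_nonneg
  have hK : IsCompact (Set.univ.pi fun v => Set.Icc (0 : ℝ) (b v)) :=
    isCompact_univ_pi fun v => isCompact_Icc
  obtain ⟨f, -, hf⟩ := hK.ultrafilter_le_nhds ((hyperfilter ℕ).map g) (by
    rw [Ultrafilter.coe_map, le_principal_iff, mem_map]
    exact univ_mem' fun k v _ => ⟨hg0 k v, hb v _⟩)
  have hf : ∀ v, Tendsto (fun k => g k v) (hyperfilter ℕ) (𝓝 (f v)) := fun v =>
    ((continuous_apply v).tendsto f).comp hf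
  have hev : ∀ {P : ℕ → Prop}, (∃ N, ∀ k ≥ N, P k) → ∀ᶠ k in (hyperfilter ℕ : Filter ℕ), P k :=
    fun hP => Nat.hyperfilter_le_atTop (eventually_atTop.2 hP)
  refine ⟨f, ⟨fun v => ?_, fun v => ?_, fun F₀ N w hw => ?_⟩, ?_⟩
  · exact ge_of_tendsto' (hf v) fun k => hg0 k v
  · have h1 : Tendsto (fun k => ∑ a ∈ (hrow v).toFinset, Real.exp (-(β * F a)) * g k (r a))
        (hyperfilter ℕ) (𝓝 (∑ a ∈ (hrow v).toFinset, Real.exp (-(β * F a)) * f (r a))) :=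
      tendsto_finsetSum _ fun a _ => (hf (r a)).const_mul _
    refine tendsto_nhds_unique_of_eventuallyEq (hf v) h1 (hev ?_)
    obtain ⟨N, hN⟩ := he {v}
    refine ⟨N, fun k hk => (harmonic_iff hrow (hg0 k) v).1 ?_⟩
    change opT s r F β (fun v => ENNReal.ofReal (g k v)) v = (fun v => ENNReal.ofReal (g k v)) v
    rw [hg]
    have hne : s (e.seq k) ≠ v := by simpa using hN k hk
    simp only [h, div_eq_mul_inv]
    rw [opT_mul_right, Green_eq v, if_neg hne, zero_add]
  · refine le_of_tendsto_of_tendsto (hf w)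
      (tendsto_finsetSum F₀ fun u _ => (hf u).const_mul (Green s r F β w u).toReal) (hev ?_)
    refine ⟨N, fun k hk => (dom_iff hG (hg0 k) F₀ w).1 ?_⟩
    have e1 : ∀ v, ENNReal.ofReal (g k v) = h k v := fun v => congrFun (hg k) v
    simp only [e1, h, div_eq_mul_inv]
    simp_rw [← mul_assoc]
    rw [← Finset.sum_mul]
    gcongr
    exact green_le_of_not_reach hk hw
  · have : ∀ k, g k v₀ = 1 := fun k => by
      simp only [g, h]
      rw [ENNReal.div_self (hv₀ _).1 (hv₀ _).2, ENNReal.toReal_one]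
    exact tendsto_nhds_unique (hf v₀) (by simp only [this]; exact tendsto_const_nhds)

end Cone

/-! ### The extremal measure -/

/-- for a row-finite graph with `0 < Σₙ A(β)ⁿ_{v₀,v} < ∞` for all `v`, every
minimal end supports an extremal `v₀`-normalized `e^{βF}`-conformal measure. -/
theorem statement19 {V A : Type} [Countable V] [Countable A] (s r : A → V)
    (F : A → ℝ) (β : ℝ)
    (hrow : ∀ v : V, {a : A | s a = v}.Finite)
    (v₀ : V) (hv₀ : ∀ v : V, Green s r F β v₀ v ≠ 0 ∧ Green s r F β v₀ v ≠ ∞)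
    (e : PathSpace s r) (he : Wandering s r e)
    (hmin : ∀ p q : PathSpace s r, Wandering s r p → Wandering s r q →
      Leads s r q e → Leads s r e q → Leads s r p q →
      Leads s r p e ∧ Leads s r e p) :
    ∃ m : Measure (PathSpace s r), ExtremalConformal s r F β m ∧
      m (cylV s r v₀) = 1 ∧
      m {x : PathSpace s r |
        ¬ (Wandering s r x ∧ Leads s r x e ∧ Leads s r e x)} = 0 := by
  classical
  have hG := Green_ne_top hv₀
  obtain ⟨f, hf⟩ := (isCompact_HBase (hrow := hrow) (e := e) hv₀).extremePoints_nonempty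
    (nonempty_HBase hv₀ he)
  obtain ⟨⟨⟨hf0, hfh, hfd⟩, hf1⟩, hext⟩ := mem_extremePoints.1 hf
  obtain ⟨m, hm, hmV⟩ := exists_preConf (s := s) (r := r) (F := F) (β := β)
    (ψ := fun v => ENNReal.ofReal (f v))
    (fun v => (harmonic_iff hrow hf0 v).2 (hfh v)) (fun v => ENNReal.ofReal_ne_top)
  have hm1 : m (cylV s r v₀) = 1 := by rw [hmV, hf1, ENNReal.ofReal_one]
  have hlead : ∀ᵐ x ∂m, Leads s r x e := by
    refine ae_leads_of_dom hm hG fun F₀ N w hw => ?_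
    simp only [hmV]
    exact (dom_iff hG hf0 F₀ w).2 (hfd F₀ N w hw)
  -- A nonnegative harmonic vector vanishing at `v₀` vanishes identically.
  have hzero : ∀ φ : V → ℝ≥0∞, (∀ v, opT s r F β φ v = φ v) → φ v₀ = 0 → ∀ v, φ v = 0 := by
    intro φ hφ h0 v
    obtain ⟨n, hn⟩ := exists_Apow_ne_zero (hv₀ v).1
    have h1 := Apow_mul_le_harmonic hφ n v₀ v
    rw [h0, nonpos_iff_eq_zero, mul_eq_zero] at h1
    exact h1.resolve_left hn
  -- Conformal measures below `m` have vertex masses in the cone.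
  have hcone : ∀ (μ : Measure (PathSpace s r)) (g : V → ℝ), PreConf s r F β μ → μ ≤ m →
      (∀ v, 0 ≤ g v) → (∀ v, μ (cylV s r v) = ENNReal.ofReal (g v)) →
      g ∈ HCone s r F β hrow e := by
    intro μ g hμ hle hg0 hg
    have hd := dom_of_ae_leads hμ (ae_mono hle hlead)
    have hh := hμ.harmonic
    simp only [hg] at hh
    refine ⟨hg0, fun v => (harmonic_iff hrow hg0 v).1 (hh v), fun F₀ N w hw => ?_⟩
    have := hd F₀ N w hw
    simp only [hg] at this
    exact (dom_iff hG hg0 F₀ w).1 this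
  refine ⟨m, ⟨⟨?_, hm⟩, ?_⟩, hm1, ?_⟩
  · rintro rfl
    simp at hm1
  · rintro m' ⟨hm'0, hm'⟩ hle
    have hm' : PreConf s r F β m' := hm'
    have hle : m' ≤ m := Measure.le_iff.2 hle
    let f' : V → ℝ := fun v => (m' (cylV s r v)).toReal
    have hf'0 : ∀ v, 0 ≤ f' v := fun v => ENNReal.toReal_nonneg
    have hm'V : ∀ v, m' (cylV s r v) = ENNReal.ofReal (f' v) := fun v =>
      (ENNReal.ofReal_toReal (hm'.1 v)).symm
    have hf'cone := hcone m' f' hm' hle hf'0 hm'V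
    have hf'le : ∀ v, f' v ≤ f v := by
      intro v
      rw [← ENNReal.ofReal_le_ofReal_iff (hf0 v), ← hm'V, ← hmV]
      exact hle _
    have ht0 : 0 < f' v₀ := by
      refine lt_of_le_of_ne (hf'0 v₀) fun h => hm'0 ?_
      have h1 := hzero _ hm'.harmonic (by simp only [hm'V, ← h, ENNReal.ofReal_zero])
      rw [← Measure.measure_univ_eq_zero]
      refine measure_mono_null ?_ (measure_iUnion_null h1)
      intro x _
      exact Set.mem_iUnion.2 ⟨s (x.seq 0), rfl⟩
    -- The complementary part of `m`, built from the harmonic vector `f - f'`.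
    let g : V → ℝ := fun v => f v - f' v
    have hg0 : ∀ v, 0 ≤ g v := fun v => sub_nonneg.2 (hf'le v)
    have hgh : ∀ v, opT s r F β (fun v => ENNReal.ofReal (g v)) v = ENNReal.ofReal (g v) := by
      intro v
      rw [harmonic_iff hrow hg0]
      simp only [g, mul_sub]
      rw [Finset.sum_sub_distrib, ← hfh v, ← hf'cone.2.1 v]
    obtain ⟨mg, hmg, hmgV⟩ := exists_preConf hgh (fun v => ENNReal.ofReal_ne_top)
    have hsum : m' + mg = m := by
      refine (hm'.add hmg).ext hm fun v => ?_
      rw [Measure.add_apply, hm'V, hmgV, hmV, ← ENNReal.ofReal_add (hf'0 v) (hg0 v)]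
      simp [g]
    have hgcone := hcone mg g hmg (by rw [← hsum]; exact Measure.le_add_left le_rfl) hg0 hmgV
    have hft : ∀ v, f' v = f' v₀ * f v := by
      rcases (hf'le v₀).eq_or_lt with h | h
      · intro v
        have h1 := hzero _ hgh (by simp [g, h]) v
        have h2 : f v - f' v ≤ 0 := ENNReal.ofReal_eq_zero.1 h1
        rw [h, hf1, one_mul]
        linarith [hf'le v]
      · rw [hf1] at h
        have h1t : 0 < 1 - f' v₀ := sub_pos.2 h
        have hb1 : (f' v₀)⁻¹ • f' ∈ HBase s r F β hrow e v₀ :=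
          ⟨HCone.smul hf'cone (inv_nonneg.2 ht0.le), by
            simp [ht0.ne']⟩
        have hb2 : (1 - f' v₀)⁻¹ • g ∈ HBase s r F β hrow e v₀ :=
          ⟨HCone.smul hgcone (inv_nonneg.2 h1t.le), by
            simp only [Pi.smul_apply, g, hf1, smul_eq_mul]
            exact inv_mul_cancel₀ h1t.ne'⟩
        have := hext _ hb1 _ hb2 ⟨f' v₀, 1 - f' v₀, ht0, h1t, by ring, by
          rw [smul_smul, smul_smul, mul_inv_cancel₀ ht0.ne', mul_inv_cancel₀ h1t.ne', one_smul,
            one_smul]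
          funext v
          simp [g]⟩
        intro v
        rw [← this.1]
        simp only [Pi.smul_apply, smul_eq_mul]
        rw [← mul_assoc, mul_inv_cancel₀ ht0.ne', one_mul]
    refine ⟨(f' v₀).toNNReal, Real.toNNReal_pos.2 ht0, hm'.ext (hm.smul _) fun v => ?_⟩
    rw [Measure.smul_apply, hm'V, hmV, hft v, ENNReal.ofReal_mul ht0.le, smul_eq_mul]
    rfl
  · have hall : ∀ᵐ x ∂m, Wandering s r x ∧ Leads s r x e ∧ Leads s r e x := by
      filter_upwards [ae_wandering hm hG, hlead] with x hx hxe
      exact ⟨hx, hmin x e hx he (leads_self he) (leads_self he) hxe⟩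
    exact ae_iff.1 hall

end GraphKMS
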